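/- For every complex number q with 0 < |q| < 1, one has ∑_{i,j,k,l ≥ 0} q^{i²+j²+k²+l²−ij−ik−il+jk+jl+j+l} / ((q;q)_i (q;q)_j (q;q)_k (q;q)_l) = (1/3) · (J_6² / (J_1² J_12)) · ( J_2⁵ J_{2,12} / (J_1² J_4² J_{1,6}) + 2 J_4³ / J_2² ). -/

import Mathlib

open scoped BigOperators

/-- The infinite q-Pochhammer symbol `(a; q)_∞ = ∏_{k=0}^∞ (1 - a q^k)`. -/
noncomputable def qPochInf (a q : ℂ) : ℂ := ∏' n : ℕ, (1 - a * q ^ n)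

/-- The finite q-Pochhammer symbol `(a; q)_n = ∏_{k=0}^{n-1} (1 - a q^k)`. -/
noncomputable def qPoch (a q : ℂ) (n : ℕ) : ℂ :=
  Finset.prod (Finset.range n) (fun k => 1 - a * q ^ k)

/-- `J_m = (q^m; q^m)_∞`. -/
noncomputable def J (q : ℂ) (m : ℕ) : ℂ := qPochInf (q ^ m) (q ^ m)

/-- `J_{a,m} = (q^a; q^m)_∞ (q^{m-a}; q^m)_∞ (q^m; q^m)_∞`. -/
noncomputable def Jam (q : ℂ) (a m : ℕ) : ℂ :=
  qPochInf (q ^ a) (q ^ m) * qPochInf (q ^ (m - a)) (q ^ m) * qPochInf (q ^ m) (q ^ m)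

/-!
Write `S(a, b, c, d)` for the sum of the theorem with the linear form `ai + bj + ck + dl` in the
exponent, and fix `u = j + k`, `v = j + l`. A `q`-Vandermonde expansion shows that the remaining
sum over `j` is symmetric in `(i, u, v)`, so that `S(0, 1, 0, 1) = S(0, 1, 1, 0) = S(1, 0, 0, 0)`.
Two contiguous relations, coming from `1 / (q; q)_{n-1} = (1 - q^n) / (q; q)_n`, express
`S(1, -1, -1, 0)` as the sum of these three. In `S(1, -1, -1, 0)` the sums over `j` and then `l`
are Durfee rectangle sums, each equal to `1 / (q; q)_∞`; what is left is the theta series of the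
hexagonal lattice, which splits by parity into products of one-dimensional theta series evaluated by
the Jacobi triple product.
-/

open Filter Topology

lemma qPoch_succ (a q : ℂ) (n : ℕ) : qPoch a q (n + 1) = qPoch a q n * (1 - a * q ^ n) :=
  Finset.prod_range_succ _ _

lemma norm_pow_lt_one {K : Type*} [NormedDivisionRing K] {q : K} {k : ℕ} (hq : ‖q‖ < 1)
    (hk : k ≠ 0) : ‖q ^ k‖ < 1 :=
  norm_pow q k ▸ pow_lt_one₀ (norm_nonneg q) hq hk

section InfiniteProducts

variable {p : ℂ}

lemma summable_norm_neg_mul_pow (a : ℂ) (hp : ‖p‖ < 1) :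
    Summable fun n : ℕ ↦ ‖-(a * p ^ n)‖ := by
  simp only [norm_neg, norm_mul, norm_pow]
  exact (summable_geometric_of_lt_one (norm_nonneg _) hp).mul_left _

lemma multipliable_one_sub_mul_pow (a : ℂ) (hp : ‖p‖ < 1) :
    Multipliable fun n : ℕ ↦ 1 - a * p ^ n := by
  simpa only [sub_eq_add_neg] using
    multipliable_one_add_of_summable (summable_norm_neg_mul_pow a hp)

lemma tendsto_qPoch (a : ℂ) (hp : ‖p‖ < 1) :
    Tendsto (qPoch a p) atTop (𝓝 (qPochInf a p)) :=
  (multipliable_one_sub_mul_pow a hp).hasProd.tendsto_prod_nat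

lemma qPochInf_ne_zero {a : ℂ} (ha : ‖a‖ < 1) (hp : ‖p‖ < 1) : qPochInf a p ≠ 0 := by
  have hfactor (n : ℕ) : 1 + -(a * p ^ n) ≠ 0 := fun h ↦ by
    have hlt : ‖a * p ^ n‖ < 1 := by
      rw [norm_mul, norm_pow]
      exact mul_lt_one_of_nonneg_of_lt_one_left (norm_nonneg _) ha
        (pow_le_one₀ (norm_nonneg _) hp.le)
    rw [← sub_eq_add_neg, sub_eq_zero] at h
    simp [← h] at hlt
  simpa only [qPochInf, sub_eq_add_neg] using
    tprod_one_add_ne_zero_of_summable hfactor (summable_norm_neg_mul_pow a hp)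

lemma qPochInf_eq_one_sub_mul (a : ℂ) (hp : ‖p‖ < 1) :
    qPochInf a p = (1 - a) * qPochInf (a * p) p := by
  have hshift (n : ℕ) : 1 - a * p ^ (n + 1) = 1 - a * p * p ^ n := by ring
  rw [qPochInf, tprod_eq_zero_mul']
  · simp only [hshift, pow_zero, mul_one, qPochInf]
  · simpa only [hshift] using multipliable_one_sub_mul_pow (a * p) hp

lemma qPochInf_mul_qPochInf_neg (a : ℂ) (hp : ‖p‖ < 1) :
    qPochInf a p * qPochInf (-a) p = qPochInf (a ^ 2) (p ^ 2) := by
  rw [qPochInf, qPochInf, ← (multipliable_one_sub_mul_pow a hp).tprod_mul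
    (multipliable_one_sub_mul_pow (-a) hp)]
  exact tprod_congr fun n ↦ by ring

lemma qPochInf_eq_prod_qPochInf_pow (a : ℂ) (hp : ‖p‖ < 1) (N : ℕ) [NeZero N] :
    qPochInf a p = ∏ r : Fin N, qPochInf (a * p ^ (r : ℕ)) (p ^ N) := by
  let e : Fin N × ℕ ≃ ℕ := (Equiv.prodComm _ _).trans (Nat.divModEquiv N).symm
  let f (r : Fin N) (n : ℕ) : ℂ := 1 - a * p ^ (r : ℕ) * (p ^ N) ^ n
  have hterm : (fun n ↦ 1 - a * p ^ n) ∘ e = fun x ↦ f x.1 x.2 := by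
    ext x
    simp only [e, f, Function.comp_apply, Equiv.trans_apply, Equiv.prodComm_apply,
      Nat.divModEquiv_symm_apply, Prod.fst_swap, Prod.snd_swap]
    ring
  have hmul : Multipliable fun x : Fin N × ℕ ↦ f x.1 x.2 :=
    hterm ▸ e.multipliable_iff.mpr (multipliable_one_sub_mul_pow a hp)
  have hfactor (r : Fin N) : Multipliable (f r) :=
    multipliable_one_sub_mul_pow _ (norm_pow_lt_one hp (NeZero.ne N))
  calc
    qPochInf a p = ∏' x, ((fun n ↦ 1 - a * p ^ n) ∘ e) x := (e.tprod_eq _).symm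
    _ = ∏' x : Fin N × ℕ, f x.1 x.2 := by rw [hterm]
    _ = ∏' r, ∏' n, f r n := hmul.tprod_prod' hfactor
    _ = ∏ r, ∏' n, f r n := tprod_fintype _
    _ = ∏ r : Fin N, qPochInf (a * p ^ (r : ℕ)) (p ^ N) := by simp only [f, qPochInf]

end InfiniteProducts

section ReciprocalQFactorial

variable {q : ℂ}

/-- The reciprocal q-factorial `1 / (q; q)_n`, extended by `0` to `n < 0`. With this convention
sums over `ℕ` become sums over `ℤ` that can be shifted freely. -/
noncomputable def qFactorialInv (q : ℂ) (n : ℤ) : ℂ :=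
  if 0 ≤ n then (qPoch q q n.toNat)⁻¹ else 0

@[simp]
lemma qFactorialInv_natCast (q : ℂ) (n : ℕ) : qFactorialInv q n = (qPoch q q n)⁻¹ := by
  simp [qFactorialInv]

lemma qFactorialInv_of_neg (q : ℂ) {n : ℤ} (hn : n < 0) : qFactorialInv q n = 0 := by
  simp [qFactorialInv, hn]

@[simp]
lemma qFactorialInv_zero (q : ℂ) : qFactorialInv q 0 = 1 := by
  simp [qFactorialInv, qPoch]

lemma not_isOfFinOrder_of_norm_lt_one (hq : ‖q‖ < 1) : ¬IsOfFinOrder q :=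
  fun h ↦ hq.ne h.norm_eq_one

lemma one_sub_pow_ne_zero (hq : ¬IsOfFinOrder q) {n : ℕ} (hn : 0 < n) : 1 - q ^ n ≠ 0 :=
  fun h ↦ hq (isOfFinOrder_iff_pow_eq_one.mpr ⟨n, hn, (sub_eq_zero.mp h).symm⟩)

lemma one_sub_zpow_mul_qFactorialInv (hq : ¬IsOfFinOrder q) (n : ℤ) :
    (1 - q ^ n) * qFactorialInv q n = qFactorialInv q (n - 1) := by
  obtain hn | rfl | hn := lt_trichotomy n 0
  · rw [qFactorialInv_of_neg q hn, qFactorialInv_of_neg q (by omega), mul_zero]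
  · rw [qFactorialInv_of_neg q (n := 0 - 1) (by norm_num), zpow_zero, sub_self, zero_mul]
  · obtain ⟨k, rfl⟩ : ∃ k : ℕ, n = (k + 1 : ℕ) := ⟨(n - 1).toNat, by omega⟩
    have hne := one_sub_pow_ne_zero hq k.succ_pos
    rw [zpow_natCast, qFactorialInv_natCast, qPoch_succ, ← pow_succ', mul_inv, Nat.cast_succ,
      add_sub_cancel_right, qFactorialInv_natCast]
    field_simp

lemma qFactorialInv_eq_one_sub_mul (hq : ¬IsOfFinOrder q) (n : ℤ) :
    qFactorialInv q n = (1 - q ^ (n + 1)) * qFactorialInv q (n + 1) := by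
  rw [one_sub_zpow_mul_qFactorialInv hq, add_sub_cancel_right]

lemma eq_zpow_mul_qFactorialInv_of_recurrence (hq : ¬IsOfFinOrder q) {c : ℂ} (hc : c ≠ 0)
    {S : ℤ → ℂ} (hneg : ∀ n < 0, S n = 0)
    (hrec : ∀ n, (1 - q ^ n) * S n = c * S (n - 1)) (n : ℤ) :
    S n = c ^ n * qFactorialInv q n * S 0 := by
  obtain hn | hn := lt_or_ge n 0
  · rw [hneg n hn, qFactorialInv_of_neg q hn, mul_zero, zero_mul]
  lift n to ℕ using hn
  induction n with
  | zero => simp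
  | succ k ih =>
    apply mul_left_cancel₀ (one_sub_pow_ne_zero hq k.succ_pos)
    have hfact := qFactorialInv_eq_one_sub_mul hq k
    have hS := hrec (k + 1 : ℕ)
    rw [zpow_natCast, Nat.cast_succ, add_sub_cancel_right, ih, hfact] at hS
    rw [Nat.cast_succ, hS, zpow_add_one₀ hc, ← zpow_natCast, Nat.cast_succ]
    ring

lemma tendsto_qFactorialInv (hq : ‖q‖ < 1) :
    Tendsto (qFactorialInv q) atTop (𝓝 (qPochInf q q)⁻¹) := by
  rw [← Nat.map_cast_int_atTop, tendsto_map'_iff]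
  exact ((tendsto_qPoch q hq).inv₀ (qPochInf_ne_zero hq hq)).congr fun n ↦
    (qFactorialInv_natCast q n).symm

lemma exists_norm_qFactorialInv_le (hq : ‖q‖ < 1) : ∃ C > 0, ∀ n, ‖qFactorialInv q n‖ ≤ C := by
  have hlim := (tendsto_qFactorialInv hq).comp tendsto_natCast_atTop_atTop
  obtain ⟨C, hC⟩ := hlim.norm.bddAbove_range
  refine ⟨max C 1, by positivity, fun n ↦ ?_⟩
  obtain hn | hn := lt_or_ge n 0
  · simp [qFactorialInv_of_neg q hn]
  · lift n to ℕ using hn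
    exact le_max_of_le_left (hC ⟨n, rfl⟩)

end ReciprocalQFactorial

section ThetaTerm

/-- The general term `(-z)^m q^{m(m-1)/2}` of Jacobi's theta series. -/
def thetaTerm {K : Type*} [Field K] (q z : K) (m : ℤ) : K :=
  (-z) ^ m * q ^ (m * (m - 1) / 2)

section Field

variable {K : Type*} [Field K] {q z : K}

@[simp]
lemma thetaTerm_zero (q z : K) : thetaTerm q z 0 = 1 := by simp [thetaTerm]

lemma thetaTerm_add_one (hq : q ≠ 0) (hz : z ≠ 0) (m : ℤ) :
    thetaTerm q z (m + 1) = -z * q ^ m * thetaTerm q z m := by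
  have hexp : (m + 1) * (m + 1 - 1) / 2 = m * (m - 1) / 2 + m := by
    rw [← Int.add_mul_ediv_right _ _ two_ne_zero]; ring_nf
  rw [thetaTerm, hexp, zpow_add_one₀ (neg_ne_zero.mpr hz), zpow_add₀ hq, thetaTerm]
  ring

lemma thetaTerm_neg (hq : q ≠ 0) (m : ℤ) :
    thetaTerm q z (-m) = thetaTerm q (q / z) m := by
  have hexp : -m * (-m - 1) / 2 = m + m * (m - 1) / 2 := by
    rw [add_comm, ← Int.add_mul_ediv_right _ _ two_ne_zero]; ring_nf
  rw [thetaTerm, thetaTerm, hexp, zpow_add₀ hq, ← mul_assoc, zpow_neg, ← inv_zpow, ← mul_zpow]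
  congr 2
  rw [inv_neg, neg_mul, mul_comm, div_eq_mul_inv]

lemma zpow_quadratic_eq_thetaTerm (hq : q ≠ 0) (k : ℕ) (r n : ℤ) :
    q ^ (k * n ^ 2 + (r - k) * n) = thetaTerm (q ^ (2 * k)) (-q ^ r) n := by
  have htwo : 2 * (n * (n - 1) / 2) = n * (n - 1) := Int.two_mul_ediv_two_of_even <| by
    simpa only [sub_add_cancel, mul_comm] using Int.even_mul_succ_self (n - 1)
  rw [thetaTerm, neg_neg, ← zpow_natCast q, ← zpow_mul, ← zpow_mul, ← zpow_add₀ hq]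
  congr 1
  push_cast
  linear_combination (-k : ℤ) * htwo

end Field

section NormedField

variable {K : Type*} [NormedField K] [CompleteSpace K] {q z : K}

lemma summable_thetaTerm_natCast (hq₀ : q ≠ 0) (hq : ‖q‖ < 1) (hz : z ≠ 0) :
    Summable fun m : ℕ ↦ thetaTerm q z m := by
  have hne (m : ℤ) : thetaTerm q z m ≠ 0 :=
    mul_ne_zero (zpow_ne_zero _ (neg_ne_zero.mpr hz)) (zpow_ne_zero _ hq₀)
  have hratio (m : ℕ) :
      ‖z‖ * ‖q‖ ^ m = ‖thetaTerm q z ((m + 1 : ℕ) : ℤ)‖ / ‖thetaTerm q z m‖ := by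
    rw [eq_div_iff (norm_ne_zero_iff.mpr (hne m)), Nat.cast_succ, thetaTerm_add_one hq₀ hz]
    simp only [norm_mul, norm_neg, zpow_natCast, norm_pow]
  have hlim : Tendsto (fun m : ℕ ↦ ‖z‖ * ‖q‖ ^ m) atTop (𝓝 (‖z‖ * 0)) :=
    (tendsto_pow_atTop_nhds_zero_of_lt_one (norm_nonneg q) hq).const_mul _
  rw [mul_zero] at hlim
  exact summable_of_ratio_test_tendsto_lt_one zero_lt_one (.of_forall fun m ↦ hne m)
    (hlim.congr hratio)

lemma summable_thetaTerm (hq₀ : q ≠ 0) (hq : ‖q‖ < 1) (hz : z ≠ 0) :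
    Summable (thetaTerm q z) := by
  refine .of_nat_of_neg (summable_thetaTerm_natCast hq₀ hq hz) ?_
  simp only [thetaTerm_neg hq₀]
  exact summable_thetaTerm_natCast hq₀ hq (div_ne_zero hq₀ hz)

lemma summable_zpow_quadratic (hq₀ : q ≠ 0) (hq : ‖q‖ < 1) {k : ℕ} (hk : k ≠ 0) (b : ℤ) :
    Summable fun n : ℤ ↦ q ^ (k * n ^ 2 + b * n) := by
  have hterm (n : ℤ) :
      q ^ (k * n ^ 2 + b * n) = thetaTerm (q ^ (2 * k)) (-q ^ (b + k)) n := by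
    rw [← zpow_quadratic_eq_thetaTerm hq₀, add_sub_cancel_right]
  simp only [hterm]
  exact summable_thetaTerm (pow_ne_zero _ hq₀) (norm_pow_lt_one hq (by omega))
    (neg_ne_zero.mpr (zpow_ne_zero _ hq₀))

lemma summable_zpow_sq_add_mul (hq₀ : q ≠ 0) (hq : ‖q‖ < 1) (b : ℤ) :
    Summable fun n : ℤ ↦ q ^ (n ^ 2 + b * n) := by
  simpa only [Nat.cast_one, one_mul] using summable_zpow_quadratic hq₀ hq one_ne_zero b

end NormedField

end ThetaTerm

section FiniteIdentities

variable {q : ℂ}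

lemma tsum_eq_of_telescoping {f g G : ℤ → ℂ} (hg : Summable g) (hG : Summable G)
    (h : ∀ n, f n = g n + (G n - G (n + 1))) : ∑' n, f n = ∑' n, g n := by
  have hG' : Summable fun n ↦ G (n + 1) := (Equiv.addRight (1 : ℤ)).summable_iff.mpr hG
  have hshift : ∑' n, G (n + 1) = ∑' n, G n := (Equiv.addRight (1 : ℤ)).tsum_eq G
  rw [tsum_congr h, hg.tsum_add (hG.sub hG'), hG.tsum_sub hG', hshift, sub_self, add_zero]

lemma qFactorialInv_mul_qFactorialInv_sub_eq_zero (q : ℂ) {n a : ℤ} (h : n < 0 ∨ a < n) :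
    qFactorialInv q n * qFactorialInv q (a - n) = 0 := by
  obtain hn | hn := h
  · rw [qFactorialInv_of_neg q hn, zero_mul]
  · rw [qFactorialInv_of_neg q (n := a - n) (by omega), mul_zero]

lemma summable_mul_qFactorialInv (q : ℂ) (f : ℤ → ℂ) (a b : ℤ) :
    Summable fun n ↦ f n * (qFactorialInv q (n - a) * qFactorialInv q (b - n)) := by
  refine summable_of_ne_finset_zero (s := Finset.Icc a b) fun n hn ↦ ?_
  rw [Finset.mem_Icc, not_and_or, not_le, not_le] at hn
  rw [← sub_sub_sub_cancel_right b n a,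
    qFactorialInv_mul_qFactorialInv_sub_eq_zero q (by omega), mul_zero]

lemma tsum_mul_qFactorialInv_sub_of_recurrence (hq : ¬IsOfFinOrder q) {c : ℂ} (hc : c ≠ 0)
    {f : ℤ → ℤ → ℂ}
    (hrec : ∀ a, (1 - q ^ a) * ∑' j, f a j * (qFactorialInv q j * qFactorialInv q (a - j)) =
      c * ∑' j, f (a - 1) j * (qFactorialInv q j * qFactorialInv q (a - 1 - j))) (a : ℤ) :
    ∑' j, f a j * (qFactorialInv q j * qFactorialInv q (a - j)) =
      c ^ a * qFactorialInv q a * f 0 0 := by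
  have hneg (a : ℤ) (ha : a < 0) :
      ∑' j, f a j * (qFactorialInv q j * qFactorialInv q (a - j)) = 0 := by
    refine (tsum_congr fun j ↦ ?_).trans tsum_zero
    rw [qFactorialInv_mul_qFactorialInv_sub_eq_zero q (by omega), mul_zero]
  rw [eq_zpow_mul_qFactorialInv_of_recurrence hq hc hneg hrec a, tsum_eq_single 0]
  · simp
  · intro j hj
    rw [qFactorialInv_mul_qFactorialInv_sub_eq_zero q (by omega), mul_zero]

lemma tsum_zpow_mul_qFactorialInv_sub (hq₀ : q ≠ 0) (hq : ¬IsOfFinOrder q) (a b : ℤ) :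
    ∑' j : ℤ, q ^ ((a - j) * (b - j)) * qFactorialInv q (b - j) *
        (qFactorialInv q j * qFactorialInv q (a - j)) =
      qFactorialInv q a * qFactorialInv q b := by
  let f (a j : ℤ) : ℂ := q ^ ((a - j) * (b - j)) * qFactorialInv q (b - j)
  suffices hrec : ∀ a, (1 - q ^ a) * ∑' j, f a j * (qFactorialInv q j * qFactorialInv q (a - j)) =
      1 * ∑' j, f (a - 1) j * (qFactorialInv q j * qFactorialInv q (a - 1 - j)) by
    simpa [f] using tsum_mul_qFactorialInv_sub_of_recurrence hq one_ne_zero hrec a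
  intro a
  rw [one_mul, ← tsum_mul_left]
  refine tsum_eq_of_telescoping
    (G := fun j ↦ q ^ ((a - j) * (b - j + 1)) * qFactorialInv q (b - j) *
      (qFactorialInv q (j - 1) * qFactorialInv q (a - j)))
    (by simpa only [sub_zero] using summable_mul_qFactorialInv q _ 0 (a - 1))
    (summable_mul_qFactorialInv q _ 1 a) fun j ↦ ?_
  have hexp : q ^ ((a - j) * (b - j)) = q ^ ((a - j - 1) * (b - j)) * q ^ (b - j) := by
    rw [← zpow_add₀ hq₀]; ring_nf
  have hexp' : q ^ ((a - j) * (b - j + 1)) =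
      q ^ ((a - j - 1) * (b - j)) * q ^ (b - j) * q ^ (a - j) := by
    rw [← zpow_add₀ hq₀, ← zpow_add₀ hq₀]; ring_nf
  have hqa : q ^ a = q ^ (a - j) * q ^ j := by rw [← zpow_add₀ hq₀, sub_add_cancel]
  simp only [f]
  rw [add_sub_cancel_right, ← sub_sub a j 1, ← sub_sub b j 1, sub_right_comm a 1 j,
    sub_add_cancel, ← one_sub_zpow_mul_qFactorialInv hq j,
    ← one_sub_zpow_mul_qFactorialInv hq (a - j), ← one_sub_zpow_mul_qFactorialInv hq (b - j),
    hexp', hexp, hqa]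
  ring

lemma tsum_thetaTerm_one_mul_qFactorialInv_sub (hq₀ : q ≠ 0) (hq : ¬IsOfFinOrder q) (a b : ℤ) :
    ∑' j : ℤ, thetaTerm q 1 j * qFactorialInv q (b - j) *
        (qFactorialInv q j * qFactorialInv q (a - j)) =
      q ^ (a * b) * (qFactorialInv q a * qFactorialInv q b) := by
  let f (_ j : ℤ) : ℂ := thetaTerm q 1 j * qFactorialInv q (b - j)
  suffices hrec : ∀ a, (1 - q ^ a) * ∑' j, f a j * (qFactorialInv q j * qFactorialInv q (a - j)) =
      q ^ b * ∑' j, f (a - 1) j * (qFactorialInv q j * qFactorialInv q (a - 1 - j)) by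
    simpa [f, ← zpow_mul, mul_comm b a, mul_assoc] using
      tsum_mul_qFactorialInv_sub_of_recurrence hq (zpow_ne_zero b hq₀) hrec a
  intro a
  rw [← tsum_mul_left, ← tsum_mul_left]
  refine tsum_eq_of_telescoping
    (G := fun j ↦ f a j * (qFactorialInv q (j - 1) * qFactorialInv q (a - j)))
    (.mul_left _ (by simpa only [sub_zero] using summable_mul_qFactorialInv q _ 0 (a - 1)))
    (summable_mul_qFactorialInv q _ 1 a) fun j ↦ ?_
  have hqa : q ^ a = q ^ (a - j) * q ^ j := by rw [← zpow_add₀ hq₀, sub_add_cancel]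
  have hqb : q ^ b = q ^ (b - j) * q ^ j := by rw [← zpow_add₀ hq₀, sub_add_cancel]
  simp only [f]
  rw [add_sub_cancel_right, thetaTerm_add_one hq₀ one_ne_zero, ← sub_sub a j 1, ← sub_sub b j 1,
    sub_right_comm a 1 j, ← one_sub_zpow_mul_qFactorialInv hq j,
    ← one_sub_zpow_mul_qFactorialInv hq (a - j), ← one_sub_zpow_mul_qFactorialInv hq (b - j),
    hqa, hqb]
  ring

/-- The finite form `∑_m (-z)^m q^{m(m-1)/2} / ((q; q)_{a-m} (q; q)_{b+m})` of Jacobi's theta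
series. -/
noncomputable def finiteTheta (q z : ℂ) (a b : ℤ) : ℂ :=
  ∑' m, thetaTerm q z m * (qFactorialInv q (b + m) * qFactorialInv q (a - m))

lemma finiteTheta_comm (hq₀ : q ≠ 0) (z : ℂ) (a b : ℤ) :
    finiteTheta q z a b = finiteTheta q (q / z) b a := by
  rw [finiteTheta, ← (Equiv.neg ℤ).tsum_eq]
  refine tsum_congr fun m ↦ ?_
  rw [Equiv.neg_apply, thetaTerm_neg hq₀, sub_neg_eq_add, ← sub_eq_add_neg,
    mul_comm (qFactorialInv q _)]

lemma one_sub_zpow_mul_finiteTheta (hq₀ : q ≠ 0) (hq : ¬IsOfFinOrder q) {z : ℂ} (hz : z ≠ 0)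
    (a b : ℤ) :
    (1 - q ^ (a + b)) * finiteTheta q z a b =
      (1 - z * q ^ (a - 1)) * finiteTheta q z (a - 1) b := by
  have hsum (f : ℤ → ℂ) (a b : ℤ) :
      Summable fun m ↦ f m * (qFactorialInv q (b + m) * qFactorialInv q (a - m)) := by
    simpa only [sub_neg_eq_add, add_comm] using summable_mul_qFactorialInv q f (-b) a
  rw [finiteTheta, finiteTheta, ← tsum_mul_left, ← tsum_mul_left]
  refine tsum_eq_of_telescoping
    (G := fun m ↦ q ^ (a - m) * thetaTerm q z m *
      (qFactorialInv q (b - 1 + m) * qFactorialInv q (a - m)))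
    ((hsum _ _ _).mul_left _) (hsum _ _ _) fun m ↦ ?_
  have hqab : q ^ (a + b) = q ^ (a - m) * q ^ (b + m) := by rw [← zpow_add₀ hq₀]; ring_nf
  have hqa : q ^ (a - 1) = q ^ (a - m - 1) * q ^ m := by rw [← zpow_add₀ hq₀]; ring_nf
  rw [← sub_sub, show b - 1 + (m + 1) = b + m by ring, sub_right_comm a 1 m, sub_add_eq_add_sub,
    ← one_sub_zpow_mul_qFactorialInv hq (b + m), ← one_sub_zpow_mul_qFactorialInv hq (a - m),
    thetaTerm_add_one hq₀ hz, hqab, hqa]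
  ring

lemma finiteTheta_natCast (hq₀ : q ≠ 0) (hq : ¬IsOfFinOrder q) {z : ℂ} (hz : z ≠ 0) (a b : ℕ) :
    finiteTheta q z a b = qPoch z q a * qPoch (q / z) q b * qFactorialInv q (a + b) := by
  have hstep {z : ℂ} (hz : z ≠ 0) (a b : ℕ) {c : ℂ}
      (h : finiteTheta q z a b = qPoch z q a * c * qFactorialInv q (a + b)) :
      finiteTheta q z (a + 1 : ℕ) b =
        qPoch z q (a + 1) * c * qFactorialInv q ((a + 1 : ℕ) + b) := by
    have hrec := one_sub_zpow_mul_finiteTheta hq₀ hq hz (a + 1 : ℕ) b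
    have hfact := one_sub_zpow_mul_qFactorialInv hq ((a + 1 : ℕ) + b)
    have hne : 1 - q ^ (((a + 1 : ℕ) : ℤ) + b) ≠ 0 := by
      exact_mod_cast one_sub_pow_ne_zero hq (n := a + 1 + b) (by omega)
    apply mul_left_cancel₀ hne
    rw [hrec, mul_left_comm, hfact, Nat.cast_succ, add_sub_cancel_right, h, qPoch_succ,
      zpow_natCast, add_right_comm, add_sub_cancel_right]
    ring
  induction b with
  | zero =>
    induction a with
    | zero =>
      rw [finiteTheta, tsum_eq_single 0]
      · simp [qPoch]
      · intro m hm
        rw [Nat.cast_zero, zero_add, qFactorialInv_mul_qFactorialInv_sub_eq_zero q (by omega),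
          mul_zero]
    | succ a ih => exact hstep hz a 0 ih
  | succ b ih =>
    have hqz : q / z ≠ 0 := div_ne_zero hq₀ hz
    rw [finiteTheta_comm hq₀, add_comm (a : ℤ), mul_comm (qPoch z q a)] at ih ⊢
    exact hstep hqz b a ih

end FiniteIdentities

section Limits

variable {q : ℂ}

lemma tendsto_tsum_mul_of_bounded {α ι : Type*} {l : Filter α} {f : ι → ℂ} (hf : Summable f)
    {u : α → ι → ℂ} {C : ℝ} (hC : ∀ n j, ‖u n j‖ ≤ C) {b : ℂ}
    (hu : ∀ j, Tendsto (u · j) l (𝓝 b)) :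
    Tendsto (fun n ↦ ∑' j, f j * u n j) l (𝓝 ((∑' j, f j) * b)) := by
  rw [← tsum_mul_right]
  refine tendsto_tsum_of_dominated_convergence (bound := fun j ↦ ‖f j‖ * C) (hf.norm.mul_right C)
    (fun j ↦ (hu j).const_mul _) (.of_forall fun n j ↦ ?_)
  rw [norm_mul]
  exact mul_le_mul_of_nonneg_left (hC n j) (norm_nonneg _)

lemma summable_zpow_mul_add_mul_qFactorialInv (hq₀ : q ≠ 0) (hq : ‖q‖ < 1) (m : ℤ) :
    Summable fun j : ℤ ↦ q ^ (j * (j + m)) * (qFactorialInv q j * qFactorialInv q (j + m)) := by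
  obtain ⟨C, hC₀, hC⟩ := exists_norm_qFactorialInv_le hq
  refine .of_norm_bounded ((summable_zpow_sq_add_mul hq₀ hq m).norm.mul_right (C * C)) fun j ↦ ?_
  rw [show j * (j + m) = j ^ 2 + m * j by ring, norm_mul, norm_mul]
  gcongr
  exacts [hC j, hC (j + m)]

lemma tsum_zpow_mul_add_mul_qFactorialInv (hq₀ : q ≠ 0) (hq : ‖q‖ < 1) (m : ℤ) :
    ∑' j : ℤ, q ^ (j * (j + m)) * (qFactorialInv q j * qFactorialInv q (j + m)) =
      (qPochInf q q)⁻¹ := by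
  obtain ⟨C, -, hC⟩ := exists_norm_qFactorialInv_le hq
  have hr := tendsto_qFactorialInv hq
  have hfinite (n : ℤ) :
      ∑' j, q ^ (j * (j + m)) * (qFactorialInv q j * qFactorialInv q (j + m)) *
        qFactorialInv q (n - j) = qFactorialInv q n * qFactorialInv q (n + m) := by
    rw [← tsum_zpow_mul_qFactorialInv_sub hq₀ (not_isOfFinOrder_of_norm_lt_one hq),
      ← (Equiv.subLeft n).tsum_eq]
    refine tsum_congr fun j ↦ ?_
    rw [Equiv.subLeft_apply, sub_sub_cancel, sub_add_eq_add_sub]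
    ring
  have hlhs := tendsto_tsum_mul_of_bounded (summable_zpow_mul_add_mul_qFactorialInv hq₀ hq m)
    (fun n j ↦ hC (n - j)) fun j ↦ hr.comp (tendsto_atTop_add_const_right atTop (-j) tendsto_id)
  have hrhs := hr.mul (hr.comp (tendsto_atTop_add_const_right atTop m tendsto_id))
  exact mul_right_cancel₀ (inv_ne_zero (qPochInf_ne_zero hq hq))
    (tendsto_nhds_unique hlhs (hrhs.congr fun n ↦ (hfinite n).symm))

theorem tsum_thetaTerm (hq₀ : q ≠ 0) (hq : ‖q‖ < 1) {z : ℂ} (hz : z ≠ 0) :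
    ∑' m, thetaTerm q z m = qPochInf z q * qPochInf (q / z) q * qPochInf q q := by
  obtain ⟨C, -, hC⟩ := exists_norm_qFactorialInv_le hq
  have hr := tendsto_qFactorialInv hq
  have hr' (m : ℤ) : Tendsto (fun n : ℕ ↦ qFactorialInv q (n + m)) atTop (𝓝 (qPochInf q q)⁻¹) :=
    hr.comp (tendsto_atTop_add_const_right atTop m tendsto_natCast_atTop_atTop)
  have hlhs := tendsto_tsum_mul_of_bounded (summable_thetaTerm hq₀ hq hz)
    (fun (n : ℕ) m ↦ norm_mul_le_of_le (hC (n + m)) (hC (n - m)))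
    fun m ↦ (hr' m).mul (hr' (-m))
  have hrhs := ((tendsto_qPoch z hq).mul (tendsto_qPoch (q / z) hq)).mul
    (hr.comp (tendsto_natCast_atTop_atTop.atTop_add_atTop tendsto_natCast_atTop_atTop))
  have hlim := tendsto_nhds_unique hlhs (hrhs.congr fun n ↦
    (finiteTheta_natCast hq₀ (not_isOfFinOrder_of_norm_lt_one hq) hz n n).symm)
  have hne := qPochInf_ne_zero hq hq
  rw [← mul_assoc] at hlim
  exact (mul_inv_eq_iff_eq_mul₀ hne).mp (mul_right_cancel₀ (inv_ne_zero hne) hlim)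

end Limits

section NahmSums

open scoped Matrix

lemma zpow_finset_sum₀ {G : Type*} [CommGroupWithZero G] {ι : Type*} {a : G} (ha : a ≠ 0)
    (s : Finset ι) (f : ι → ℤ) : a ^ (∑ i ∈ s, f i) = ∏ i ∈ s, a ^ f i := by
  induction s using Finset.cons_induction with
  | empty => simp
  | cons i s hi ih => rw [Finset.sum_cons, Finset.prod_cons, zpow_add₀ ha, ih]

variable {ι : Type*} [Fintype ι] {q : ℂ} {B : Matrix ι ι ℤ}

lemma summable_prod_pi {κ : Type*} {g : ι → κ → ℝ} (hg₀ : ∀ i k, 0 ≤ g i k)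
    (hg : ∀ i, Summable (g i)) : Summable fun n : ι → κ ↦ ∏ i, g i (n i) := by
  classical
  refine summable_of_sum_le (c := ∏ i, ∑' k, g i k) (fun n ↦ Finset.prod_nonneg fun i _ ↦ hg₀ i _)
    fun u ↦ ?_
  have hsub : u ⊆ Fintype.piFinset fun i ↦ u.image (· i) := fun n hn ↦
    Fintype.mem_piFinset.mpr fun i ↦ Finset.mem_image_of_mem _ hn
  calc
    ∑ n ∈ u, ∏ i, g i (n i) ≤ ∑ n ∈ Fintype.piFinset fun i ↦ u.image (· i), ∏ i, g i (n i) :=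
      Finset.sum_le_sum_of_subset_of_nonneg hsub fun n _ _ ↦ Finset.prod_nonneg fun i _ ↦ hg₀ i _
    _ = ∏ i, ∑ k ∈ u.image (· i), g i k := (Finset.prod_univ_sum _ _).symm
    _ ≤ ∏ i, ∑' k, g i k := Finset.prod_le_prod (fun i _ ↦ Finset.sum_nonneg fun k _ ↦ hg₀ i k)
      fun i _ ↦ (hg i).sum_le_tsum _ fun k _ ↦ hg₀ i k

lemma summable_norm_zpow_quadraticForm (hq₀ : q ≠ 0) (hq : ‖q‖ < 1) {N : ℕ} (hN : N ≠ 0)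
    (hB : ∀ n, n ⬝ᵥ n ≤ N * (n ⬝ᵥ B *ᵥ n)) (b : ι → ℤ) :
    Summable fun n : ι → ℤ ↦ ‖q ^ (n ⬝ᵥ B *ᵥ n + b ⬝ᵥ n)‖ := by
  obtain ⟨s, hs₀, hs₁, hs⟩ : ∃ s : ℝ, 0 < s ∧ s < 1 ∧ s ^ N = ‖q‖ :=
    ⟨‖q‖ ^ (N⁻¹ : ℝ), Real.rpow_pos_of_pos (norm_pos_iff.mpr hq₀) _,
      Real.rpow_lt_one (norm_nonneg q) hq (by positivity),
      Real.rpow_inv_natCast_pow (norm_nonneg q) hN⟩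
  have hprod : Summable fun n : ι → ℤ ↦ ∏ i, s ^ (n i ^ 2 + N * b i * n i) :=
    summable_prod_pi (g := fun i k ↦ s ^ (k ^ 2 + N * b i * k))
      (fun i k ↦ (zpow_pos hs₀ _).le) fun i ↦
        summable_zpow_sq_add_mul hs₀.ne' (by rwa [Real.norm_of_nonneg hs₀.le]) _
  refine hprod.of_nonneg_of_le (fun n ↦ norm_nonneg _) fun n ↦ ?_
  rw [norm_zpow, ← hs, ← zpow_natCast s, ← zpow_mul, ← zpow_finset_sum₀ hs₀.ne']
  refine zpow_le_zpow_right_of_le_one₀ hs₀ hs₁.le ?_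
  calc
    ∑ i, (n i ^ 2 + N * b i * n i) = n ⬝ᵥ n + N * (b ⬝ᵥ n) := by
      simp only [dotProduct, Finset.sum_add_distrib, Finset.mul_sum, sq, mul_assoc]
    _ ≤ N * (n ⬝ᵥ B *ᵥ n + b ⬝ᵥ n) := by rw [mul_add]; gcongr; exact hB n

/-- The general term `q^{nᵀBn + bᵀn} / ∏ᵢ (q; q)_{nᵢ}` of the Nahm sum attached to `B` and `b`. The
index `n` is integral; the terms having a negative entry vanish. The customary symmetric matrix of
the quadratic form, in the normalization `nᵀAn / 2`, is `A = B + Bᵀ`. -/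
noncomputable def nahmTerm (q : ℂ) (B : Matrix ι ι ℤ) (b n : ι → ℤ) : ℂ :=
  q ^ (n ⬝ᵥ B *ᵥ n + b ⬝ᵥ n) * ∏ i, qFactorialInv q (n i)

/-- The Nahm sum `∑ₙ q^{nᵀBn + bᵀn} / ∏ᵢ (q; q)_{nᵢ}`. -/
noncomputable def nahmSum (q : ℂ) (B : Matrix ι ι ℤ) (b : ι → ℤ) : ℂ :=
  ∑' n, nahmTerm q B b n

lemma summable_nahmTerm (hq₀ : q ≠ 0) (hq : ‖q‖ < 1) {N : ℕ} (hN : N ≠ 0)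
    (hB : ∀ n, n ⬝ᵥ n ≤ N * (n ⬝ᵥ B *ᵥ n)) (b : ι → ℤ) : Summable (nahmTerm q B b) := by
  obtain ⟨C, -, hC⟩ := exists_norm_qFactorialInv_le hq
  refine .of_norm_bounded
    ((summable_norm_zpow_quadraticForm hq₀ hq hN hB b).mul_right (∏ _ : ι, C)) fun n ↦ ?_
  rw [nahmTerm, norm_mul, norm_prod]
  gcongr
  exact hC _

lemma nahmSum_eq_tsum_natCast (q : ℂ) (B : Matrix ι ι ℤ) (b : ι → ℤ) :
    nahmSum q B b = ∑' n : ι → ℕ, nahmTerm q B b fun i ↦ n i := by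
  have hinj : Function.Injective fun (n : ι → ℕ) (i : ι) ↦ (n i : ℤ) :=
    Nat.cast_injective.comp_left
  refine (hinj.tsum_eq fun n hn ↦ ?_).symm
  have hpos (i : ι) : 0 ≤ n i := by
    by_contra hi
    exact hn <| mul_eq_zero_of_right _ <|
      Finset.prod_eq_zero (Finset.mem_univ i) (qFactorialInv_of_neg q (not_le.mp hi))
  exact ⟨fun i ↦ (n i).toNat, funext fun i ↦ Int.toNat_of_nonneg (hpos i)⟩

variable [DecidableEq ι]

lemma nahmTerm_add_single_sub (hq₀ : q ≠ 0) (hq : ¬IsOfFinOrder q) (b n : ι → ℤ) (i : ι) :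
    nahmTerm q B b (n + Pi.single i 1) - nahmTerm q B (b + Pi.single i 1) (n + Pi.single i 1) =
      q ^ (B i i + b i) * nahmTerm q B (b + B.row i + B.col i) n := by
  have hexp : (n + Pi.single i 1) ⬝ᵥ B *ᵥ (n + Pi.single i 1) + b ⬝ᵥ (n + Pi.single i 1) =
      B i i + b i + (n ⬝ᵥ B *ᵥ n + (b + B.row i + B.col i) ⬝ᵥ n) := by
    rw [Matrix.mulVec_add, Matrix.mulVec_single_one, add_dotProduct, dotProduct_add, dotProduct_add,
      single_one_dotProduct, single_one_dotProduct, dotProduct_add, dotProduct_single_one,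
      add_dotProduct, add_dotProduct, dotProduct_comm n (B.col i)]
    rw [Matrix.col_apply, show (B *ᵥ n) i = B.row i ⬝ᵥ n from rfl]
    ring
  have hexp' : (b + Pi.single i 1) ⬝ᵥ (n + Pi.single i 1) =
      b ⬝ᵥ (n + Pi.single i 1) + (n i + 1) := by
    rw [add_dotProduct, single_one_dotProduct, Pi.add_apply, Pi.single_eq_same]
  have hrest : ∏ j ∈ Finset.univ.erase i, qFactorialInv q ((n + Pi.single i 1 : ι → ℤ) j) =
      ∏ j ∈ Finset.univ.erase i, qFactorialInv q (n j) :=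
    Finset.prod_congr rfl fun j hj ↦ by
      rw [Pi.add_apply, Pi.single_eq_of_ne (Finset.ne_of_mem_erase hj), add_zero]
  rw [nahmTerm, nahmTerm, nahmTerm, hexp', ← add_assoc, zpow_add₀ hq₀ _ (n i + 1), hexp,
    zpow_add₀ hq₀ (B i i + b i)]
  simp only [← Finset.mul_prod_erase _ _ (Finset.mem_univ i)]
  rw [hrest, Pi.add_apply, Pi.single_eq_same, qFactorialInv_eq_one_sub_mul hq (n i)]
  ring

lemma nahmSum_eq_add_single_add (hq₀ : q ≠ 0) (hq : ‖q‖ < 1) {N : ℕ} (hN : N ≠ 0)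
    (hB : ∀ n, n ⬝ᵥ n ≤ N * (n ⬝ᵥ B *ᵥ n)) (b : ι → ℤ) (i : ι) :
    nahmSum q B b = nahmSum q B (b + Pi.single i 1) +
      q ^ (B i i + b i) * nahmSum q B (b + B.row i + B.col i) := by
  have hsum := summable_nahmTerm hq₀ hq hN hB
  rw [← sub_eq_iff_eq_add', nahmSum, nahmSum, nahmSum, ← (hsum b).tsum_sub (hsum _),
    ← tsum_mul_left, ← (Equiv.addRight (Pi.single i (1 : ℤ))).tsum_eq]
  exact tsum_congr fun n ↦
    nahmTerm_add_single_sub hq₀ (not_isOfFinOrder_of_norm_lt_one hq) b n i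

end NahmSums

section NahmMatrix

open scoped Matrix

variable {q : ℂ}

/-- The matrix of the quadratic form `i² + j² + k² + l² - ij - ik - il + jk + jl`, written in upper
triangular form to keep its entries integral. -/
def nahmMatrix : Matrix (Fin 4) (Fin 4) ℤ :=
  !![1, -1, -1, -1; 0, 1, 1, 1; 0, 0, 1, 0; 0, 0, 0, 1]

lemma dotProduct_nahmMatrix_mulVec (i j k l : ℤ) :
    ![i, j, k, l] ⬝ᵥ nahmMatrix *ᵥ ![i, j, k, l] =
      i ^ 2 + j ^ 2 + k ^ 2 + l ^ 2 - i * j - i * k - i * l + j * k + j * l := by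
  simp only [nahmMatrix, dotProduct, Matrix.mulVec, Fin.sum_univ_four, Matrix.of_apply,
    Matrix.cons_val]
  ring

lemma dotProduct_self_le_nahmMatrix (n : Fin 4 → ℤ) :
    n ⬝ᵥ n ≤ (5 : ℕ) * (n ⬝ᵥ nahmMatrix *ᵥ n) := by
  obtain ⟨i, j, k, l, rfl⟩ : ∃ i j k l, n = ![i, j, k, l] :=
    ⟨n 0, n 1, n 2, n 3, (FinVec.etaExpand_eq n).symm⟩
  rw [dotProduct_nahmMatrix_mulVec]
  simp only [dotProduct, Fin.sum_univ_four, Matrix.cons_val]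
  push_cast
  nlinarith [sq_nonneg (j + k + l - 2 * i), sq_nonneg (j + k + l - i + j), sq_nonneg (i + j),
    sq_nonneg (k - l), sq_nonneg (j + k + l - i)]

lemma nahmTerm_nahmMatrix (q : ℂ) (a b c d i j k l : ℤ) :
    nahmTerm q nahmMatrix ![a, b, c, d] ![i, j, k, l] =
      q ^ (i ^ 2 + j ^ 2 + k ^ 2 + l ^ 2 - i * j - i * k - i * l + j * k + j * l +
          (a * i + b * j + c * k + d * l)) *
        (qFactorialInv q i * qFactorialInv q j * qFactorialInv q k * qFactorialInv q l) := by
  rw [nahmTerm, dotProduct_nahmMatrix_mulVec]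
  simp only [dotProduct, Fin.sum_univ_four, Fin.prod_univ_four, Matrix.cons_val]

lemma summable_nahmTerm_nahmMatrix (hq₀ : q ≠ 0) (hq : ‖q‖ < 1) (b : Fin 4 → ℤ) :
    Summable (nahmTerm q nahmMatrix b) :=
  summable_nahmTerm hq₀ hq (by norm_num) dotProduct_self_le_nahmMatrix b

lemma tsum_natCast_nahmTerm_nahmMatrix (q : ℂ) (b : Fin 4 → ℤ) :
    ∑' p : ℕ × ℕ × ℕ × ℕ, nahmTerm q nahmMatrix b ![p.1, p.2.1, p.2.2.1, p.2.2.2] =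
      nahmSum q nahmMatrix b := by
  let e : ℕ × ℕ × ℕ × ℕ ≃ (Fin 4 → ℕ) :=
    { toFun p := ![p.1, p.2.1, p.2.2.1, p.2.2.2]
      invFun n := (n 0, n 1, n 2, n 3)
      left_inv _ := rfl
      right_inv n := by ext i; fin_cases i <;> rfl }
  rw [nahmSum_eq_tsum_natCast, ← e.tsum_eq]
  exact tsum_congr fun p ↦ congrArg _ <| by ext i; fin_cases i <;> rfl

/-- The inner sum `∑_j q^{(a-j)(b-j)+ij} / ((q; q)_i (q; q)_j (q; q)_{a-j} (q; q)_{b-j})` of the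
Nahm sum of `nahmMatrix` when `a = j + k` and `b = j + l` are kept fixed. -/
noncomputable def nahmKernel (q : ℂ) (i a b : ℤ) : ℂ :=
  ∑' j : ℤ, q ^ ((a - j) * (b - j) + i * j) *
    (qFactorialInv q i * qFactorialInv q j * qFactorialInv q (a - j) * qFactorialInv q (b - j))

lemma nahmKernel_eq_tsum_thetaTerm (hq₀ : q ≠ 0) (hq : ¬IsOfFinOrder q) (i a b : ℤ) :
    nahmKernel q i a b = ∑' m, thetaTerm q 1 m * qFactorialInv q m *
      (qFactorialInv q (i - m) * qFactorialInv q (a - m) * qFactorialInv q (b - m)) := by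
  let f (j m : ℤ) : ℂ := q ^ ((a - j) * (b - j)) * qFactorialInv q (a - j) *
    qFactorialInv q (b - j) * (thetaTerm q 1 m * qFactorialInv q (j - m) *
      (qFactorialInv q m * qFactorialInv q (i - m)))
  have hfin : Summable (Function.uncurry f) := by
    refine summable_of_ne_finset_zero (s := Finset.Icc 0 a ×ˢ Finset.Icc 0 i) fun ⟨j, m⟩ hjm ↦ ?_
    simp only [Finset.mem_product, Finset.mem_Icc] at hjm
    obtain h | h | h | h : m < 0 ∨ i < m ∨ j < m ∨ a < j := by omega
    · simp [f, qFactorialInv_of_neg q h]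
    all_goals simp [f, qFactorialInv_of_neg q (sub_neg.mpr h)]
  calc
    nahmKernel q i a b = ∑' j, ∑' m, f j m := tsum_congr fun j ↦ by
      rw [tsum_mul_left, tsum_thetaTerm_one_mul_qFactorialInv_sub hq₀ hq, zpow_add₀ hq₀]
      ring
    _ = ∑' m, ∑' j, f j m := hfin.tsum_comm.symm
    _ = _ := tsum_congr fun m ↦ by
      have hinner := tsum_zpow_mul_qFactorialInv_sub hq₀ hq (a - m) (b - m)
      rw [mul_assoc (qFactorialInv q (i - m)), ← hinner, ← mul_assoc, ← tsum_mul_left,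
        ← (Equiv.addRight m).tsum_eq]
      refine tsum_congr fun j ↦ ?_
      simp only [f, Equiv.coe_addRight, add_sub_cancel_right, sub_sub, add_comm m]
      ring

lemma nahmKernel_rotate (hq₀ : q ≠ 0) (hq : ¬IsOfFinOrder q) (i a b : ℤ) :
    nahmKernel q i a b = nahmKernel q a b i := by
  rw [nahmKernel_eq_tsum_thetaTerm hq₀ hq, nahmKernel_eq_tsum_thetaTerm hq₀ hq]
  exact tsum_congr fun m ↦ by ring

lemma nahmSum_eq_tsum_nahmKernel (hq₀ : q ≠ 0) (hq : ‖q‖ < 1) (x y z : ℤ) :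
    nahmSum q nahmMatrix ![x, y + z, y, z] = ∑' v : ℤ × ℤ × ℤ,
      q ^ (v.1 ^ 2 + v.2.1 ^ 2 + v.2.2 ^ 2 - v.1 * v.2.1 - v.2.1 * v.2.2 - v.2.2 * v.1 +
        (x * v.1 + y * v.2.1 + z * v.2.2)) * nahmKernel q v.1 v.2.1 v.2.2 := by
  let e : (ℤ × ℤ × ℤ) × ℤ ≃ (Fin 4 → ℤ) :=
    { toFun v := ![v.1.1, v.2, v.1.2.1 - v.2, v.1.2.2 - v.2]
      invFun n := ((n 0, n 1 + n 2, n 1 + n 3), n 1)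
      left_inv v := by simp
      right_inv n := by ext i; fin_cases i <;> simp }
  have hsum : Summable (nahmTerm q nahmMatrix ![x, y + z, y, z] ∘ e) :=
    e.summable_iff.mpr (summable_nahmTerm_nahmMatrix hq₀ hq _)
  rw [nahmSum, ← e.tsum_eq]
  refine hsum.tsum_prod.trans (tsum_congr fun ⟨i, a, b⟩ ↦ ?_)
  rw [nahmKernel, ← tsum_mul_left]
  refine tsum_congr fun j ↦ ?_
  simp only [Function.comp_apply, e, Equiv.coe_fn_mk, nahmTerm_nahmMatrix]
  rw [← mul_assoc (q ^ _) (q ^ _), ← zpow_add₀ hq₀]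
  congr 2
  ring

lemma nahmSum_rotate (hq₀ : q ≠ 0) (hq : ‖q‖ < 1) (x y z : ℤ) :
    nahmSum q nahmMatrix ![x, y + z, y, z] = nahmSum q nahmMatrix ![y, z + x, z, x] := by
  let e : ℤ × ℤ × ℤ ≃ ℤ × ℤ × ℤ :=
    { toFun v := (v.2.2, v.1, v.2.1)
      invFun v := (v.2.1, v.2.2, v.1)
      left_inv _ := rfl
      right_inv _ := rfl }
  rw [nahmSum_eq_tsum_nahmKernel hq₀ hq, nahmSum_eq_tsum_nahmKernel hq₀ hq, ← e.tsum_eq]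
  refine tsum_congr fun v ↦ ?_
  simp only [e, Equiv.coe_fn_mk]
  rw [nahmKernel_rotate hq₀ (not_isOfFinOrder_of_norm_lt_one hq)]
  ring_nf

lemma three_mul_nahmSum (hq₀ : q ≠ 0) (hq : ‖q‖ < 1) :
    3 * nahmSum q nahmMatrix ![0, 1, 0, 1] = nahmSum q nahmMatrix ![1, -1, -1, 0] := by
  have hcontig := nahmSum_eq_add_single_add hq₀ hq (by norm_num) dotProduct_self_le_nahmMatrix
  have hj : nahmSum q nahmMatrix ![1, -1, -1, 0] =
      nahmSum q nahmMatrix ![1, 0, -1, 0] + nahmSum q nahmMatrix ![0, 1, 0, 1] := by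
    convert hcontig ![1, -1, -1, 0] 1 using 2
    · congr 1; decide
    · rw [show ![1, -1, -1, 0] + nahmMatrix.row 1 + nahmMatrix.col 1 = ![0, 1, 0, 1] by decide]
      exact (one_mul _).symm
  have hk : nahmSum q nahmMatrix ![1, 0, -1, 0] =
      nahmSum q nahmMatrix ![1, 0, 0, 0] + nahmSum q nahmMatrix ![0, 1, 1, 0] := by
    convert hcontig ![1, 0, -1, 0] 2 using 2
    · congr 1; decide
    · rw [show ![1, 0, -1, 0] + nahmMatrix.row 2 + nahmMatrix.col 2 = ![0, 1, 1, 0] by decide]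
      exact (one_mul _).symm
  have hrot₁ : nahmSum q nahmMatrix ![0, 1, 0, 1] = nahmSum q nahmMatrix ![0, 1, 1, 0] :=
    nahmSum_rotate hq₀ hq 0 0 1
  have hrot₂ : nahmSum q nahmMatrix ![0, 1, 1, 0] = nahmSum q nahmMatrix ![1, 0, 0, 0] :=
    nahmSum_rotate hq₀ hq 0 1 0
  linear_combination 2 * hrot₁ + hrot₂ - hj - hk

end NahmMatrix

section Hexagonal

open scoped Matrix

variable {q : ℂ}

lemma summable_zpow_hexagonal (hq₀ : q ≠ 0) (hq : ‖q‖ < 1) (a b : ℤ) :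
    Summable fun v : ℤ × ℤ ↦ q ^ (v.1 ^ 2 - v.1 * v.2 + v.2 ^ 2 + (a * v.1 + b * v.2)) := by
  have hform (n : Fin 2 → ℤ) : n ⬝ᵥ n ≤ (2 : ℕ) * (n ⬝ᵥ !![1, -1; 0, 1] *ᵥ n) := by
    simp only [dotProduct, Matrix.mulVec, Fin.sum_univ_two, Matrix.of_apply, Matrix.cons_val]
    push_cast
    nlinarith [sq_nonneg (n 0 - n 1)]
  rw [← (finTwoArrowEquiv ℤ).summable_iff]
  refine (summable_norm_zpow_quadraticForm hq₀ hq two_ne_zero hform ![a, b]).of_norm.congr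
    fun n ↦ congrArg (q ^ ·) ?_
  change _ = n 0 ^ 2 - n 0 * n 1 + n 1 ^ 2 + (a * n 0 + b * n 1)
  simp only [dotProduct, Matrix.mulVec, Fin.sum_univ_two, Matrix.of_apply, Matrix.cons_val]
  ring

lemma tsum_eq_sum_tsum_mul_add {g : ℤ → ℂ} (hg : Summable g) (N : ℕ) [NeZero N] :
    ∑' n, g n = ∑ r : Fin N, ∑' n, g (n * N + r) := by
  let e : Fin N × ℤ ≃ ℤ := (Equiv.prodComm (Fin N) ℤ).trans (Int.divModEquiv N).symm
  have hge : Summable (g ∘ e) := e.summable_iff.mpr hg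
  rw [← e.tsum_eq]
  exact hge.tsum_prod.trans (tsum_fintype _)

lemma tsum_zpow_hexagonal (hq₀ : q ≠ 0) (hq : ‖q‖ < 1) (a b : ℤ) :
    ∑' v : ℤ × ℤ, q ^ (v.1 ^ 2 - v.1 * v.2 + v.2 ^ 2 + (a * v.1 + b * v.2)) =
      ∑ r : Fin 2, q ^ ((r : ℤ) ^ 2 + a * r) *
        ((∑' m : ℤ, q ^ (m ^ 2 + (b - r) * m)) *
          ∑' e : ℤ, q ^ (3 * e ^ 2 + (2 * a + b + 3 * r) * e)) := by
  have hsum := summable_zpow_hexagonal hq₀ hq a b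
  rw [hsum.tsum_prod, tsum_eq_sum_tsum_mul_add hsum.prod 2]
  refine Finset.sum_congr rfl fun r _ ↦ ?_
  rw [← tsum_mul_left, ← tsum_mul_left]
  refine tsum_congr fun e ↦ ?_
  rw [← (Equiv.addRight e).tsum_eq, mul_left_comm, ← zpow_add₀ hq₀, ← tsum_mul_right]
  refine tsum_congr fun m ↦ ?_
  rw [← zpow_add₀ hq₀, Equiv.coe_addRight]
  congr 1
  push_cast
  ring

lemma nahmSum_eq_mul_tsum_hexagonal (hq₀ : q ≠ 0) (hq : ‖q‖ < 1) (x y : ℤ) :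
    nahmSum q nahmMatrix ![y, -y, x, -x - y] = (qPochInf q q)⁻¹ ^ 2 *
      ∑' v : ℤ × ℤ, q ^ (v.1 ^ 2 - v.1 * v.2 + v.2 ^ 2 + (x * v.1 + y * v.2)) := by
  let e : ((ℤ × ℤ) × ℤ) × ℤ ≃ (Fin 4 → ℤ) :=
    { toFun v := ![v.2 + (v.1.1.2 + v.1.2), v.2, v.1.2 + v.1.1.1, v.1.2]
      invFun n := (((n 2 - n 3, n 0 - n 1 - n 3), n 3), n 1)
      left_inv v := by simp
      right_inv n := by ext i; fin_cases i <;> simp }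
  have hsum : Summable (nahmTerm q nahmMatrix ![y, -y, x, -x - y] ∘ e) :=
    e.summable_iff.mpr (summable_nahmTerm_nahmMatrix hq₀ hq _)
  have hterm (d m l j : ℤ) :
      nahmTerm q nahmMatrix ![y, -y, x, -x - y] (e (((d, m), l), j)) =
        q ^ (d ^ 2 - d * m + m ^ 2 + (x * d + y * m)) *
          (q ^ (l * (l + d)) * (qFactorialInv q l * qFactorialInv q (l + d)) *
            (q ^ (j * (j + (m + l))) * (qFactorialInv q j * qFactorialInv q (j + (m + l))))) := by
    calc
      _ = q ^ (d ^ 2 - d * m + m ^ 2 + (x * d + y * m) + l * (l + d) + j * (j + (m + l))) *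
          (qFactorialInv q (j + (m + l)) * qFactorialInv q j * qFactorialInv q (l + d) *
            qFactorialInv q l) := by
        simp only [e, Equiv.coe_fn_mk, nahmTerm_nahmMatrix]
        congr 2
        ring
      _ = _ := by
        rw [zpow_add₀ hq₀, zpow_add₀ hq₀]
        ring
  rw [nahmSum, ← e.tsum_eq, ← tsum_mul_left]
  refine hsum.tsum_prod.trans (hsum.prod.tsum_prod.trans (tsum_congr fun ⟨d, m⟩ ↦ ?_))
  simp only [Function.comp_apply, hterm, tsum_mul_left,
    tsum_zpow_mul_add_mul_qFactorialInv hq₀ hq, tsum_mul_right]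
  ring

end Hexagonal

section ThetaProducts

variable {q : ℂ} {k r : ℕ}

lemma J_ne_zero (hq : ‖q‖ < 1) (hk : k ≠ 0) : J q k ≠ 0 :=
  qPochInf_ne_zero (norm_pow_lt_one hq hk) (norm_pow_lt_one hq hk)

lemma Jam_ne_zero (hq : ‖q‖ < 1) (hr : r ≠ 0) (hrk : r < k) : Jam q r k ≠ 0 := by
  have hk := norm_pow_lt_one hq (by omega : k ≠ 0)
  exact mul_ne_zero (mul_ne_zero (qPochInf_ne_zero (norm_pow_lt_one hq hr) hk)
    (qPochInf_ne_zero (norm_pow_lt_one hq (by omega)) hk)) (qPochInf_ne_zero hk hk)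

lemma Jam_sub (hrk : r ≤ k) : Jam q (k - r) k = Jam q r k := by
  rw [Jam, Jam, Nat.sub_sub_self hrk, mul_comm (qPochInf (q ^ (k - r)) _)]

lemma J_mul_qPochInf_neg_pow (hq : ‖q‖ < 1) (hk : k ≠ 0) :
    J q k * qPochInf (-q ^ k) (q ^ k) = J q (2 * k) := by
  rw [J, J, qPochInf_mul_qPochInf_neg _ (norm_pow_lt_one hq hk), ← pow_mul, mul_comm]

lemma Jam_self_two_mul (hq : ‖q‖ < 1) (hk : k ≠ 0) :
    Jam q k (2 * k) = J q k ^ 2 / J q (2 * k) := by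
  have hsplit : J q k = qPochInf (q ^ k) (q ^ (2 * k)) * J q (2 * k) := by
    rw [J, qPochInf_eq_prod_qPochInf_pow _ (norm_pow_lt_one hq hk) 2, Fin.prod_univ_two, J]
    simp only [Fin.val_zero, Fin.val_one, ← pow_mul, ← pow_add]
    ring_nf
  rw [eq_div_iff (J_ne_zero hq (by omega)), hsplit, Jam, J, show 2 * k - k = k by omega]
  ring

lemma Jam_self_three_mul (hq : ‖q‖ < 1) (hk : k ≠ 0) : Jam q k (3 * k) = J q k := by
  rw [J, qPochInf_eq_prod_qPochInf_pow _ (norm_pow_lt_one hq hk) 3, Fin.prod_univ_three, Jam,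
    show 3 * k - k = k + k by omega]
  simp only [Fin.val_zero, Fin.val_one, Fin.val_two, ← pow_mul, ← pow_add]
  ring_nf

lemma qPochInf_neg_mul_qPochInf_neg (hq : ‖q‖ < 1) (hr : r ≠ 0) (hrk : r < k) :
    qPochInf (-q ^ r) (q ^ k) * qPochInf (-q ^ (k - r)) (q ^ k) =
      J q k * Jam q (2 * r) (2 * k) / (J q (2 * k) * Jam q r k) := by
  have hk := norm_pow_lt_one hq (by omega : k ≠ 0)
  have h2k := J_ne_zero hq (by omega : 2 * k ≠ 0)
  have hdouble (m : ℕ) : qPochInf (q ^ m) (q ^ k) * qPochInf (-q ^ m) (q ^ k) =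
      qPochInf (q ^ (2 * m)) (q ^ (2 * k)) := by
    rw [qPochInf_mul_qPochInf_neg _ hk, ← pow_mul, ← pow_mul, mul_comm m, mul_comm k]
  rw [eq_div_iff (mul_ne_zero h2k (Jam_ne_zero hq hr hrk)), Jam, Jam, ← Nat.mul_sub,
    ← hdouble, ← hdouble, J, J]
  ring

lemma tsum_zpow_quadratic_eq_qPochInf (hq₀ : q ≠ 0) (hq : ‖q‖ < 1) (hk : k ≠ 0) (hrk : r ≤ 2 * k) :
    ∑' n : ℤ, q ^ (k * n ^ 2 + (r - k) * n) =
      qPochInf (-q ^ r) (q ^ (2 * k)) * qPochInf (-q ^ (2 * k - r)) (q ^ (2 * k)) *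
        J q (2 * k) := by
  have hdiv : q ^ (2 * k) / -q ^ r = -q ^ (2 * k - r) := by
    rw [div_neg, pow_sub₀ q hq₀ hrk, div_eq_mul_inv]
  simp only [zpow_quadratic_eq_thetaTerm hq₀]
  rw [zpow_natCast, tsum_thetaTerm (pow_ne_zero _ hq₀) (norm_pow_lt_one hq (by omega))
    (neg_ne_zero.mpr (pow_ne_zero r hq₀)), hdiv, J]

lemma tsum_zpow_quadratic_eq_Jam (hq₀ : q ≠ 0) (hq : ‖q‖ < 1) (hr : r ≠ 0) (hrk : r < 2 * k) :
    ∑' n : ℤ, q ^ (k * n ^ 2 + (r - k) * n) =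
      J q (2 * k) ^ 2 * Jam q (2 * r) (2 * (2 * k)) / (J q (2 * (2 * k)) * Jam q r (2 * k)) := by
  rw [tsum_zpow_quadratic_eq_qPochInf hq₀ hq (by omega) hrk.le,
    qPochInf_neg_mul_qPochInf_neg hq hr hrk]
  ring

lemma tsum_zpow_sq (hq₀ : q ≠ 0) (hq : ‖q‖ < 1) :
    ∑' n : ℤ, q ^ n ^ 2 = J q 2 ^ 5 / (J q 1 ^ 2 * J q 4 ^ 2) := by
  have htheta : ∑' n : ℤ, q ^ n ^ 2 = J q 2 ^ 2 * Jam q 2 4 / (J q 4 * Jam q 1 2) := by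
    simpa using tsum_zpow_quadratic_eq_Jam (k := 1) hq₀ hq one_ne_zero (by norm_num)
  have h12 : Jam q 1 2 = J q 1 ^ 2 / J q 2 := Jam_self_two_mul hq one_ne_zero
  have h24 : Jam q 2 4 = J q 2 ^ 2 / J q 4 := Jam_self_two_mul hq two_ne_zero
  rw [htheta, h12, h24]
  field_simp [J_ne_zero hq]

lemma tsum_zpow_sq_add_self (hq₀ : q ≠ 0) (hq : ‖q‖ < 1) :
    ∑' n : ℤ, q ^ (n ^ 2 + n) = 2 * J q 4 ^ 2 / J q 2 := by
  have htheta : ∑' n : ℤ, q ^ (n ^ 2 + n) =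
      qPochInf (-q ^ 2) (q ^ 2) * qPochInf (-1) (q ^ 2) * J q 2 := by
    simpa using tsum_zpow_quadratic_eq_qPochInf (k := 1) (r := 2) hq₀ hq one_ne_zero le_rfl
  have hfirst : qPochInf (-1) (q ^ 2) = 2 * qPochInf (-q ^ 2) (q ^ 2) := by
    rw [qPochInf_eq_one_sub_mul _ (norm_pow_lt_one hq two_ne_zero)]
    norm_num
  have hneg : J q 2 * qPochInf (-q ^ 2) (q ^ 2) = J q 4 := J_mul_qPochInf_neg_pow hq two_ne_zero
  rw [htheta, hfirst, eq_div_iff (J_ne_zero hq two_ne_zero), ← hneg]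
  ring

lemma tsum_zpow_three_mul_sq_sub_self (hq₀ : q ≠ 0) (hq : ‖q‖ < 1) :
    ∑' n : ℤ, q ^ (3 * n ^ 2 - n) = J q 6 ^ 2 * J q 4 / (J q 12 * J q 2) := by
  have h26 : Jam q 2 6 = J q 2 := Jam_self_three_mul hq two_ne_zero
  have h412 : Jam q 4 12 = J q 4 := Jam_self_three_mul hq four_ne_zero
  simpa [h26, h412, ← sub_eq_add_neg] using
    tsum_zpow_quadratic_eq_Jam (k := 3) hq₀ hq two_ne_zero (by norm_num)

lemma tsum_zpow_three_mul_sq_add_two_mul_self (hq₀ : q ≠ 0) (hq : ‖q‖ < 1) :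
    ∑' n : ℤ, q ^ (3 * n ^ 2 + 2 * n) = J q 6 ^ 2 * Jam q 2 12 / (J q 12 * Jam q 1 6) := by
  have h56 : Jam q 5 6 = Jam q 1 6 := Jam_sub (r := 1) (k := 6) (by norm_num)
  have h1012 : Jam q 10 12 = Jam q 2 12 := Jam_sub (r := 2) (k := 12) (by norm_num)
  simpa [h56, h1012] using
    tsum_zpow_quadratic_eq_Jam (k := 3) (r := 5) hq₀ hq (by norm_num) (by norm_num)

lemma tsum_zpow_hexagonal_eq_J (hq₀ : q ≠ 0) (hq : ‖q‖ < 1) :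
    ∑' v : ℤ × ℤ, q ^ (v.1 ^ 2 - v.1 * v.2 + v.2 ^ 2 + (-1 * v.1 + 1 * v.2)) =
      J q 6 ^ 2 / J q 12 * (J q 2 ^ 5 * Jam q 2 12 / (J q 1 ^ 2 * J q 4 ^ 2 * Jam q 1 6) +
        2 * J q 4 ^ 3 / J q 2 ^ 2) :=
  calc
    _ = (∑' m : ℤ, q ^ (m ^ 2 + m)) * (∑' e : ℤ, q ^ (3 * e ^ 2 - e)) +
        (∑' m : ℤ, q ^ m ^ 2) * ∑' e : ℤ, q ^ (3 * e ^ 2 + 2 * e) := by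
      simpa [Fin.sum_univ_two, ← sub_eq_add_neg] using tsum_zpow_hexagonal hq₀ hq (-1) 1
    _ = _ := by
      rw [tsum_zpow_sq hq₀ hq, tsum_zpow_sq_add_self hq₀ hq,
        tsum_zpow_three_mul_sq_sub_self hq₀ hq, tsum_zpow_three_mul_sq_add_two_mul_self hq₀ hq]
      simp only [div_eq_mul_inv, mul_inv]
      ring

end ThetaProducts

theorem stmt_11 (q : ℂ) (h0 : 0 < ‖q‖) (h1 : ‖q‖ < 1) :
    (∑' p : ℕ × ℕ × ℕ × ℕ,
      (fun (i j k l : ℕ) =>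
        q ^ (((i:ℤ)^2 + (j:ℤ)^2 + (k:ℤ)^2 + (l:ℤ)^2 - (i:ℤ)*(j:ℤ) - (i:ℤ)*(k:ℤ) - (i:ℤ)*(l:ℤ) + (j:ℤ)*(k:ℤ) + (j:ℤ)*(l:ℤ) + (j:ℤ) + (l:ℤ)) : ℤ) /
          (qPoch (q ^ 1) (q ^ 1) i * qPoch (q ^ 1) (q ^ 1) j * qPoch (q ^ 1) (q ^ 1) k * qPoch (q ^ 1) (q ^ 1) l))
        p.1 p.2.1 p.2.2.1 p.2.2.2)
    = (1/3) * ((J q 6)^2 / ((J q 1)^2 * J q 12)) *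
      ((J q 2)^5 * Jam q 2 12 / ((J q 1)^2 * (J q 4)^2 * Jam q 1 6)
        + 2 * (J q 4)^3 / (J q 2)^2) := by
  have hq₀ : q ≠ 0 := norm_pos_iff.mp h0
  calc
    _ = nahmSum q nahmMatrix ![0, 1, 0, 1] := by
      rw [← tsum_natCast_nahmTerm_nahmMatrix]
      refine tsum_congr fun p ↦ ?_
      rw [nahmTerm_nahmMatrix]
      simp only [pow_one, qFactorialInv_natCast, div_eq_mul_inv, mul_inv]
      congr 2
      ring
    _ = 1 / 3 * nahmSum q nahmMatrix ![1, -1, -1, 0] := by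
      rw [← three_mul_nahmSum hq₀ h1]
      ring
    _ = 1 / 3 * ((J q 1)⁻¹ ^ 2 *
        ∑' v : ℤ × ℤ, q ^ (v.1 ^ 2 - v.1 * v.2 + v.2 ^ 2 + (-1 * v.1 + 1 * v.2))) := by
      rw [J, pow_one]
      exact congrArg _ (nahmSum_eq_mul_tsum_hexagonal hq₀ h1 (-1) 1)
    _ = _ := by
      rw [tsum_zpow_hexagonal_eq_J hq₀ h1]
      ring
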